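/- arXiv:2411.00181 — 4 statements merged into one kernel-verified Lean document; each statement's English description precedes it below -/
import Mathlib

section
/- For every natural number k ≥ 1 and every real number p with 0 < p and p^k + p = 1, one has 1 − (1 + log k)/k < p. -/
theorem root_lower_bound (k : ℕ) (hk : 1 ≤ k) (p : ℝ) (hp : 0 < p)
    (hroot : p ^ k + p = 1) :
    1 - (1 + Real.log k) / k < p := by
  by_contra hcon
  have h0 : p ≤ 1 - (1 + Real.log k) / k := not_lt.mp hcon
  have hk1 : (1 : ℝ) ≤ k := by exact_mod_cast hk
  have hkp : (0 : ℝ) < k := by linarith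
  have hlog : 0 ≤ Real.log k := Real.log_nonneg hk1
  have h1 : (1 + Real.log k) / k ≤ 1 - p := by linarith
  rw [div_le_iff₀ hkp] at h1
  have h2 : p ≤ Real.exp (-(1 - p)) := by
    have := Real.add_one_le_exp (-(1 - p))
    linarith
  have h3 : p ^ k ≤ Real.exp (-(1 - p)) ^ k := pow_le_pow_left₀ hp.le h2 k
  rw [← Real.exp_nat_mul] at h3
  have h4 : Real.exp (k * -(1 - p)) < Real.exp (-Real.log k) :=
    Real.exp_lt_exp.mpr (by nlinarith)
  rw [Real.exp_neg, Real.exp_log hkp] at h4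
  have h5 : 1 - p < (k : ℝ)⁻¹ := by linarith
  have h6 : (1 - p) * k < (k : ℝ)⁻¹ * k := mul_lt_mul_of_pos_right h5 hkp
  rw [inv_mul_cancel₀ hkp.ne'] at h6
  linarith
end

section
/- For every natural number k ≥ 2 and every real number p with 0 < p and p^k + p = 1, one has p < 1 − (log k − log (log k))/(2k). -/
theorem root_upper_bound (k : ℕ) (hk : 2 ≤ k) (p : ℝ) (hp : 0 < p)
    (hroot : p ^ k + p = 1) :
    p < 1 - (Real.log k - Real.log (Real.log k)) / (2 * k) := by
  have hk2 : (2 : ℝ) ≤ k := by exact_mod_cast hk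
  have hk0 : (0 : ℝ) < k := by linarith
  have hL : 0.69 < Real.log k := by
    have h1 := Real.log_two_gt_d9
    have h2 : Real.log 2 ≤ Real.log k := Real.log_le_log (by norm_num) hk2
    linarith
  have hLk : Real.log k ≤ k - 1 := Real.log_le_sub_one_of_pos hk0
  have hexpL : Real.exp (Real.log k) = k := Real.exp_log hk0
  set L := Real.log k with hLdef
  have hL0 : 0 < L := by linarith
  have hinv : L⁻¹ < 1.5 := by
    rw [inv_lt_comm₀ hL0 (by norm_num)]
    norm_num at hL ⊢
    linarith
  have hlow : 1 - L⁻¹ ≤ Real.log L := Real.one_sub_inv_le_log_of_pos hL0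
  have hup : Real.log L ≤ L - 1 := Real.log_le_sub_one_of_pos hL0
  set M := Real.log L with hM
  have hexpM : Real.exp M = L := Real.exp_log hL0
  by_contra hcon
  push Not at hcon
  set x := (L - M) / (2 * k) with hx
  have hxk : 2 * k * x = L - M := by rw [hx]; field_simp
  have hx0 : 0 ≤ x := by rw [hx]; apply div_nonneg <;> linarith
  have hx1 : x ≤ 1 / 2 := by
    rw [hx, div_le_iff₀ (by linarith)]; linarith
  have he : Real.exp (-(2 * x)) ≤ 1 - x := by
    rw [Real.exp_neg, inv_le_iff_one_le_mul₀ (Real.exp_pos _)]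
    have := Real.add_one_le_exp (2 * x)
    nlinarith
  have hpk : Real.exp (-(2 * x)) ^ k ≤ p ^ k :=
    pow_le_pow_left₀ (Real.exp_pos _).le (he.trans hcon) k
  have hval : Real.exp (-(2 * x)) ^ k = L / k := by
    rw [← Real.exp_nat_mul, show (k : ℝ) * -(2 * x) = M - L by linarith, Real.exp_sub,
      hexpM, hexpL]
  have h3 : L / k ≤ x := by linarith
  rw [div_le_iff₀ hk0] at h3
  have hLL : L⁻¹ * L = 1 := inv_mul_cancel₀ hL0.ne'
  norm_num at hL hinv
  nlinarith
end

section
/- Let p : ℕ → ℝ be any function such that for every natural number k ≥ 1, p(k) > 0 and p(k)^k + p(k) = 1. Then the function k ↦ 1 − p(k) is Θ(log k / k) as k → ∞; that is, there exist constants c₁, c₂ > 0 and K such that for all k ≥ K, c₁ · (log k)/k ≤ 1 − p(k) ≤ c₂ · (log k)/k. -/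
theorem one_sub_root_is_theta_log_div (p : ℕ → ℝ)
    (hp : ∀ k : ℕ, 1 ≤ k → 0 < p k ∧ (p k) ^ k + p k = 1) :
    ∃ c₁ c₂ : ℝ, 0 < c₁ ∧ 0 < c₂ ∧ ∃ K : ℕ, ∀ k : ℕ, K ≤ k →
      c₁ * (Real.log k) / k ≤ 1 - p k ∧ 1 - p k ≤ c₂ * (Real.log k) / k := by
  refine ⟨1/4, 1, by norm_num, by norm_num, 3, fun k hk => ?_⟩
  obtain ⟨h0, h1⟩ := hp k (by omega)
  have hk3 : (3:ℝ) ≤ k := by exact_mod_cast hk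
  have hk0 : (0:ℝ) < k := by linarith
  have hL : 1 ≤ Real.log k := by
    rw [Real.le_log_iff_exp_le hk0]
    linarith [Real.exp_one_lt_d9]
  have hpk : 0 < p k ^ k := pow_pos h0 k
  have hq0 : 0 < 1 - p k := by linarith
  have hlog : Real.log (1 - p k) = k * Real.log (p k) := by
    rw [← Real.log_pow]; congr 1; linarith
  constructor
  · by_contra! h
    rw [lt_div_iff₀ hk0] at h
    have hLk : Real.log k ≤ k := by linarith [Real.log_le_sub_one_of_pos hk0]
    have hq4 : 1 - p k < 1/4 := by
      by_contra! h'
      nlinarith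
    have hinv := Real.one_sub_inv_le_log_of_pos h0
    have h2 : -2 * (1 - p k) ≤ 1 - (p k)⁻¹ := by
      have : (p k)⁻¹ ≤ 1 + 2 * (1 - p k) := by
        rw [inv_le_iff_one_le_mul₀ h0]
        nlinarith
      linarith
    have h3 : -(Real.log k / 2) < Real.log (1 - p k) := by
      rw [hlog]
      have : (k:ℝ) * (-2 * (1 - p k)) ≤ k * Real.log (p k) :=
        mul_le_mul_of_nonneg_left (h2.trans hinv) hk0.le
      linarith
    have hs : 0 < Real.sqrt k := Real.sqrt_pos.2 hk0
    have hss : Real.sqrt k * Real.sqrt k = k := Real.mul_self_sqrt hk0.le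
    have hls : Real.log (Real.sqrt k) = Real.log k / 2 := Real.log_sqrt hk0.le
    have h4 : 0 < Real.log ((1 - p k) * Real.sqrt k) := by
      rw [Real.log_mul hq0.ne' hs.ne']; linarith
    have h5 : 1 < (1 - p k) * Real.sqrt k := by
      by_contra! h'
      linarith [Real.log_nonpos (mul_pos hq0 hs).le h']
    have h6 := Real.log_le_sub_one_of_pos hs
    nlinarith
  · by_contra! h
    rw [div_lt_iff₀ hk0] at h
    have h2 := Real.log_le_sub_one_of_pos h0
    have h3 : (k:ℝ) * Real.log (p k) ≤ k * (p k - 1) := mul_le_mul_of_nonneg_left h2 hk0.le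
    have h4 : 0 < Real.log ((1 - p k) * k) := Real.log_pos (by linarith)
    rw [Real.log_mul hq0.ne' hk0.ne'] at h4
    linarith
end

section
/- Let S be a finite set, let k ≥ 1 be a natural number, and let q : S → ℝ satisfy 0 ≤ q(e) ≤ 1 for every e ∈ S. Then (∏_{e ∈ S} q(e))^(1/k) ≤ ∏_{e ∈ S} (1 − (1 − q(e))/k), where the left-hand exponentiation is real power with exponent 1/k. -/
theorem prod_rpow_inv_nat_le_prod_bernoulli {ι : Type*} (S : Finset ι)
    (k : ℕ) (hk : 1 ≤ k) (q : ι → ℝ)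
    (hq0 : ∀ e ∈ S, 0 ≤ q e) (hq1 : ∀ e ∈ S, q e ≤ 1) :
    (∏ e ∈ S, q e) ^ ((1 : ℝ) / k) ≤ ∏ e ∈ S, (1 - (1 - q e) / k) := by
  have hk' : (1 : ℝ) ≤ k := by exact_mod_cast hk
  rw [← Real.finset_prod_rpow S q hq0]
  refine Finset.prod_le_prod (fun e he => Real.rpow_nonneg (hq0 e he) _) (fun e he => ?_)
  have h := rpow_one_add_le_one_add_mul_self (s := q e - 1) (by linarith [hq0 e he])
    (p := (1 : ℝ) / k) (by positivity) (by rw [div_le_one (by linarith)]; exact hk')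
  have e1 : 1 + (q e - 1) = q e := by ring
  have e2 : 1 + (1 : ℝ) / k * (q e - 1) = 1 - (1 - q e) / k := by ring
  rwa [e1, e2] at h
end
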